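/- For all μ ∈ [0, 1) and all a ≥ 1, [a³μ² + a²μ(8 − 9μ²) − μ(4 − 7μ² + 2μ⁴) + a(12 − 29μ² + 16μ⁴)] · exp((1 + aμ)/(1 − μ²)) − [a³μ² − a²μ(8 − 9μ²) + μ(4 − 7μ² + 2μ⁴) + a(12 − 29μ² + 16μ⁴)] · exp((1 − aμ)/(1 − μ²)) ≥ 0. -/

import Mathlib

/-!
Both the second coefficient and the second exponent arise from the first by `μ ↦ -μ`. Writing
`P μ` for the coefficient and cancelling a common exponential, the claim is
`P (-μ) ≤ P μ * exp (2 a μ / (1 - μ ^ 2))`. A Taylor expansion at `a = 1` gives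
`2 (1 - μ ^ 2) ≤ P μ`, so in particular `0 ≤ P μ`. If `μ ^ 2 ≤ 8 / 9`, then `P (-μ) ≤ P μ` and the
exponential is only needed to be at least `1`. Otherwise `P (-μ) ≤ 2 a ^ 3`, and since
`1 - μ ^ 2` is small, the cubic term of the exponential series at `a / (1 - μ ^ 2)` suffices.
-/

open Real
open scoped Nat

theorem pow_le_factorial_mul_pow_mul_exp_div {x s : ℝ} (hx : 0 ≤ x) (hs : 0 < s) (n : ℕ) :
    x ^ n ≤ n ! * s ^ n * exp (x / s) := by
  have h := pow_div_factorial_le_exp (x / s) (by positivity) n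
  rwa [div_pow, div_div, div_le_iff₀' (by positivity), mul_comm (s ^ n)] at h

/-- The coefficient of `exp ((1 + a * μ) / (1 - μ ^ 2))` in the third-level inequality; the
coefficient subtracted with `exp ((1 - a * μ) / (1 - μ ^ 2))` is its value at `-μ`. -/
def thirdLevelCoeff (a μ : ℝ) : ℝ :=
  a ^ 3 * μ ^ 2 + a ^ 2 * μ * (8 - 9 * μ ^ 2) - μ * (4 - 7 * μ ^ 2 + 2 * μ ^ 4)
    + a * (12 - 29 * μ ^ 2 + 16 * μ ^ 4)

section

variable {a μ : ℝ}

theorem two_mul_one_sub_sq_le_thirdLevelCoeff (hμ0 : 0 ≤ μ) (hμ1 : μ ≤ 1) (ha : 1 ≤ a) :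
    2 * (1 - μ ^ 2) ≤ thirdLevelCoeff a μ := by
  have taylor : thirdLevelCoeff a μ - 2 * (1 - μ ^ 2) =
      (a - 1) ^ 3 * μ ^ 2
        + (a - 1) ^ 2 * (μ * (8 * (1 - μ ^ 2) + μ * (2 + (1 - μ))))
        + (a - 1) * ((1 - μ) * (12 + 12 * μ + 2 * μ ^ 2 + 16 * μ * (1 - μ ^ 2)))
        + (1 - μ ^ 2) * ((1 - μ) * (10 + 12 * μ + 2 * μ * (1 - μ))) := by
    unfold thirdLevelCoeff
    ring
  have : 0 ≤ a - 1 := sub_nonneg.mpr ha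
  have : 0 ≤ 1 - μ := sub_nonneg.mpr hμ1
  have : 0 ≤ 1 - μ ^ 2 := sub_nonneg.mpr (pow_le_one₀ hμ0 hμ1)
  rw [← sub_nonneg, taylor]
  positivity

theorem thirdLevelCoeff_neg_le_self (hμ0 : 0 ≤ μ) (hμ : μ ^ 2 ≤ 8 / 9) (ha : 1 ≤ a) :
    thirdLevelCoeff a (-μ) ≤ thirdLevelCoeff a μ := by
  have odd_part : thirdLevelCoeff a μ - thirdLevelCoeff a (-μ) =
      2 * μ * ((a ^ 2 - 1) * (8 - 9 * μ ^ 2) + (1 - μ ^ 2) * (4 + 2 * μ ^ 2)) := by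
    unfold thirdLevelCoeff
    ring
  have : 0 ≤ a ^ 2 - 1 := sub_nonneg.mpr (one_le_pow₀ ha)
  have : 0 ≤ 8 - 9 * μ ^ 2 := by linarith
  have : 0 ≤ 1 - μ ^ 2 := by linarith
  rw [← sub_nonneg, odd_part]
  positivity

theorem thirdLevelCoeff_neg_le_two_mul_cube (hμ0 : 0 ≤ μ) (hμ1 : μ ≤ 1) (hμ : 8 / 9 ≤ μ ^ 2)
    (ha : 1 ≤ a) : thirdLevelCoeff a (-μ) ≤ 2 * a ^ 3 := by
  have hμ_sq : μ ^ 2 ≤ 1 := pow_le_one₀ hμ0 hμ1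
  have cubic : a ^ 3 * μ ^ 2 ≤ a ^ 3 := mul_le_of_le_one_right (by positivity) hμ_sq
  have quadratic : a ^ 2 * (μ * (9 * μ ^ 2 - 8)) ≤ a ^ 3 :=
    calc a ^ 2 * (μ * (9 * μ ^ 2 - 8)) ≤ a ^ 2 :=
          mul_le_of_le_one_right (by positivity)
            (mul_le_one₀ hμ1 (by linarith) (by linarith))
      _ ≤ a ^ 3 := pow_le_pow_right₀ ha (by norm_num)
  have linear : a * (12 - 29 * μ ^ 2 + 16 * μ ^ 4) ≤ 0 :=
    mul_nonpos_of_nonneg_of_nonpos (by positivity) (by nlinarith)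
  have constant : μ * (4 - 7 * μ ^ 2 + 2 * μ ^ 4) ≤ 0 :=
    mul_nonpos_of_nonneg_of_nonpos hμ0 (by nlinarith)
  calc thirdLevelCoeff a (-μ)
      = a ^ 3 * μ ^ 2 + a ^ 2 * (μ * (9 * μ ^ 2 - 8)) + μ * (4 - 7 * μ ^ 2 + 2 * μ ^ 4)
          + a * (12 - 29 * μ ^ 2 + 16 * μ ^ 4) := by
        unfold thirdLevelCoeff
        ring
    _ ≤ 2 * a ^ 3 := by linarith

theorem cube_le_one_sub_sq_mul_exp (hμ0 : 0 ≤ μ) (hμ1 : μ < 1) (hμ : 8 / 9 ≤ μ ^ 2)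
    (ha : 0 ≤ a) : a ^ 3 ≤ (1 - μ ^ 2) * exp (2 * (a * μ) / (1 - μ ^ 2)) := by
  have hs : 0 < 1 - μ ^ 2 := sub_pos.mpr (pow_lt_one₀ hμ0 hμ1 two_ne_zero)
  have hs_sq : 6 * (1 - μ ^ 2) ^ 2 ≤ 1 := by nlinarith
  have h_half : 1 ≤ 2 * μ := by nlinarith
  calc a ^ 3 ≤ 3 ! * (1 - μ ^ 2) ^ 3 * exp (a / (1 - μ ^ 2)) :=
        pow_le_factorial_mul_pow_mul_exp_div ha hs 3
    _ = (1 - μ ^ 2) * (6 * (1 - μ ^ 2) ^ 2) * exp (a / (1 - μ ^ 2)) := by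
        norm_num [Nat.factorial]
        ring
    _ ≤ (1 - μ ^ 2) * exp (a / (1 - μ ^ 2)) := by
        gcongr
        exact mul_le_of_le_one_right hs.le hs_sq
    _ ≤ (1 - μ ^ 2) * exp (2 * (a * μ) / (1 - μ ^ 2)) := by
        gcongr
        calc a ≤ a * (2 * μ) := le_mul_of_one_le_right ha h_half
          _ = 2 * (a * μ) := by ring

theorem thirdLevelCoeff_neg_le_mul_exp (hμ0 : 0 ≤ μ) (hμ1 : μ < 1) (ha : 1 ≤ a) :
    thirdLevelCoeff a (-μ) ≤ thirdLevelCoeff a μ * exp (2 * (a * μ) / (1 - μ ^ 2)) := by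
  have hs : 0 < 1 - μ ^ 2 := sub_pos.mpr (pow_lt_one₀ hμ0 hμ1 two_ne_zero)
  have h_lower := two_mul_one_sub_sq_le_thirdLevelCoeff hμ0 hμ1.le ha
  rcases le_total (μ ^ 2) (8 / 9) with hμ | hμ
  · calc thirdLevelCoeff a (-μ) ≤ thirdLevelCoeff a μ := thirdLevelCoeff_neg_le_self hμ0 hμ ha
      _ ≤ thirdLevelCoeff a μ * exp (2 * (a * μ) / (1 - μ ^ 2)) :=
        le_mul_of_one_le_right (by linarith) (one_le_exp (by positivity))
  · calc thirdLevelCoeff a (-μ) ≤ 2 * a ^ 3 :=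
          thirdLevelCoeff_neg_le_two_mul_cube hμ0 hμ1.le hμ ha
      _ ≤ 2 * ((1 - μ ^ 2) * exp (2 * (a * μ) / (1 - μ ^ 2))) := by
        gcongr
        exact cube_le_one_sub_sq_mul_exp hμ0 hμ1 hμ (by linarith)
      _ = 2 * (1 - μ ^ 2) * exp (2 * (a * μ) / (1 - μ ^ 2)) := (mul_assoc _ _ _).symm
      _ ≤ thirdLevelCoeff a μ * exp (2 * (a * μ) / (1 - μ ^ 2)) := by gcongr

end

theorem derivative_inequality_third_level (μ a : ℝ) (hμ0 : 0 ≤ μ) (hμ1 : μ < 1) (ha : 1 ≤ a) :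
    (a^3*μ^2 + a^2*μ*(8 - 9*μ^2) - μ*(4 - 7*μ^2 + 2*μ^4) + a*(12 - 29*μ^2 + 16*μ^4))
        * Real.exp ((1 + a*μ)/(1 - μ^2))
      - (a^3*μ^2 - a^2*μ*(8 - 9*μ^2) + μ*(4 - 7*μ^2 + 2*μ^4) + a*(12 - 29*μ^2 + 16*μ^4))
        * Real.exp ((1 - a*μ)/(1 - μ^2)) ≥ 0 := by
  have coeff_neg : a^3*μ^2 - a^2*μ*(8 - 9*μ^2) + μ*(4 - 7*μ^2 + 2*μ^4)
      + a*(12 - 29*μ^2 + 16*μ^4) = thirdLevelCoeff a (-μ) := by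
    unfold thirdLevelCoeff
    ring
  have exp_split : exp (2 * (a * μ) / (1 - μ ^ 2)) * exp ((1 - a * μ) / (1 - μ ^ 2)) =
      exp ((1 + a * μ) / (1 - μ ^ 2)) := by
    rw [← exp_add]
    ring_nf
  rw [← thirdLevelCoeff, coeff_neg, ge_iff_le, sub_nonneg, ← exp_split, ← mul_assoc]
  gcongr
  exact thirdLevelCoeff_neg_le_mul_exp hμ0 hμ1 ha
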